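/- Construction II with d = 1, second graph. Let D₂ be the directed graph on the vertex set V = {(i, B) : i ∈ P, B ∈ 𝓑_i}, with adjacency (i, B) → (j, B′) if and only if either i ∈ B′, or i = j and B ≠ B′. Then D₂ is a directed strongly regular graph with parameters (v, k, t, λ, μ) = (ls² + s, ls + s − 1, l + s − 1, l + s − 2, l + 1). -/

import Mathlib

/-- A loopless directed graph (given by its adjacency relation `Adj` on the vertex
type `V`) is a *directed strongly regular graph* with parameters `(v, k, t, lam, mu)`:
the vertex set is finite of size `v`; every vertex has exactly `k` out-neighbors and
exactly `k` in-neighbors; every vertex has exactly `t` out-neighbors that are also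
in-neighbors; and for distinct vertices `x, y`, the number of directed paths of
length two from `x` to `y` is `lam` if `x → y` and `mu` otherwise. -/
def IsDSRG {V : Type} (Adj : V → V → Prop) (v k t lam mu : ℕ) : Prop :=
  Finite V ∧
  (∀ x : V, ¬ Adj x x) ∧
  Nat.card V = v ∧
  (∀ x : V, Nat.card {y : V // Adj x y} = k) ∧
  (∀ x : V, Nat.card {y : V // Adj y x} = k) ∧
  (∀ x : V, Nat.card {y : V // Adj x y ∧ Adj y x} = t) ∧
  (∀ x y : V, x ≠ y → Adj x y → Nat.card {z : V // Adj x z ∧ Adj z y} = lam) ∧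
  (∀ x y : V, x ≠ y → ¬ Adj x y → Nat.card {z : V // Adj x z ∧ Adj z y} = mu)

/-!
Distinct vertices satisfy `(i, B) → (j, B')` exactly when `i ∈ insert j B'`. So if `S` is the
vertex-point matrix recording the base points and `T` is the point-vertex matrix recording the sets
`insert j B'`, the adjacency matrix of `D₂` is `A = S * T - 1`. Since the blocks of `𝓑 j` partition
the points other than `j`, the product in the other order is `T * S = J + (s - 1) • 1`, where
`J = vecMulVec 1 1` is the all-ones matrix. Hence `A * A = S * (T * S) * T - 2 • (S * T) + 1` is a
combination of `1`, `A` and `J`, whose coefficients give `t`, `λ` and `μ`.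
-/

open Matrix

section RelMatrix

variable {α β γ R : Type*}

open scoped Classical in
/-- The zero-one matrix over `R` of a relation, for counting by matrix products. Decidability is
classical, so that it does not depend on a choice of instances. -/
noncomputable def relMatrix (R : Type*) [Zero R] [One R] (r : α → β → Prop) : Matrix α β R :=
  .of fun a b => if r a b then 1 else 0

section ZeroOne

variable [Zero R] [One R] {r : α → β → Prop} {a : α} {b : β}

lemma relMatrix_of_rel (h : r a b) : relMatrix R r a b = 1 := if_pos h

lemma relMatrix_of_not_rel (h : ¬ r a b) : relMatrix R r a b = 0 := if_neg h

end ZeroOne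

variable [Fintype β] [NonAssocSemiring R]

lemma relMatrix_mul_relMatrix_apply (r : α → β → Prop) (q : β → γ → Prop) (a : α) (c : γ) :
    (relMatrix R r * relMatrix R q) a c = Nat.card {b // r a b ∧ q b c} := by
  classical
  simp [relMatrix, mul_apply, ← ite_and, Fintype.card_subtype, and_comm]

lemma relMatrix_mulVec_one_apply (r : α → β → Prop) (a : α) :
    (relMatrix R r *ᵥ 1) a = Nat.card {b // r a b} := by
  classical
  simp [relMatrix, mulVec, dotProduct, Fintype.card_subtype]

lemma one_vecMul_relMatrix_apply (q : β → γ → Prop) (c : γ) :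
    (1 ᵥ* relMatrix R q) c = Nat.card {b // q b c} := by
  classical
  simp [relMatrix, vecMul, dotProduct, Fintype.card_subtype]

lemma relMatrix_graph_mul_apply (f : α → β) (M : Matrix β γ R) (a : α) (c : γ) :
    (relMatrix R (fun a b => f a = b) * M) a c = M (f a) c := by
  classical
  simp [relMatrix, mul_apply]

end RelMatrix

theorem IsDSRG.of_relMatrix {V : Type} {R : Type*} [Fintype V] [DecidableEq V] [Ring R] [CharZero R]
    {Adj : V → V → Prop} {v k t lam mu : ℕ} (irrefl : ∀ x, ¬ Adj x x)
    (card_eq : (Fintype.card V : R) = v)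
    (mulVec_one : relMatrix R Adj *ᵥ 1 = (k : R) • 1)
    (one_vecMul : 1 ᵥ* relMatrix R Adj = (k : R) • 1)
    (mul_self : relMatrix R Adj * relMatrix R Adj =
      (t : R) • 1 + (lam : R) • relMatrix R Adj +
        (mu : R) • (vecMulVec 1 1 - 1 - relMatrix R Adj)) :
    IsDSRG Adj v k t lam mu := by
  have paths (x y : V) : (Nat.card {z // Adj x z ∧ Adj z y} : R) =
      t * (1 : Matrix V V R) x y + lam * relMatrix R Adj x y +
        mu * (1 - (1 : Matrix V V R) x y - relMatrix R Adj x y) := by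
    rw [← relMatrix_mul_relMatrix_apply, mul_self]
    simp
  refine ⟨inferInstance, irrefl, ?_, fun x => ?_, fun x => ?_, fun x => ?_,
    fun x y hne hadj => ?_, fun x y hne hadj => ?_⟩ <;> rw [← Nat.cast_inj (R := R)]
  · rw [Nat.card_eq_fintype_card, card_eq]
  · simp [← relMatrix_mulVec_one_apply, mulVec_one]
  · simp [← one_vecMul_relMatrix_apply, one_vecMul]
  · simp [paths, relMatrix_of_not_rel (irrefl x)]
  · simp [paths, relMatrix_of_rel hadj, hne]
  · simp [paths, relMatrix_of_not_rel hadj, hne]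

section Factorization

variable {V P R : Type*} [Fintype V] [Fintype P] [CommRing R]
  {S : Matrix V P R} {T : Matrix P V R} {c m s : R}

lemma card_eq_of_mulVec_one_of_one_vecMul (hS : S *ᵥ 1 = 1) (hS' : 1 ᵥ* S = s • 1) :
    (Fintype.card V : R) = s * Fintype.card P :=
  calc (Fintype.card V : R) = 1 ⬝ᵥ S *ᵥ 1 := by rw [hS, one_dotProduct_one]
    _ = s * Fintype.card P := by
      rw [dotProduct_mulVec, hS', smul_dotProduct, one_dotProduct_one, smul_eq_mul]

variable [DecidableEq V]

lemma one_vecMul_mul_sub_one (hS : 1 ᵥ* S = s • 1) (hT : 1 ᵥ* T = m • 1) :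
    1 ᵥ* (S * T - 1) = (s * m - 1) • 1 := by
  rw [vecMul_sub, ← vecMul_vecMul, hS, smul_vecMul, hT, vecMul_one, smul_smul, sub_smul, one_smul]

variable [DecidableEq P]

lemma mul_sub_one_mulVec_one (hTS : T * S = vecMulVec 1 1 + c • 1) (hS : S *ᵥ 1 = 1) :
    (S * T - 1) *ᵥ 1 = (Fintype.card P + c - 1) • 1 := by
  have hT : T *ᵥ 1 = (Fintype.card P + c) • 1 :=
    calc T *ᵥ 1 = (T * S) *ᵥ 1 := by rw [← mulVec_mulVec, hS]
      _ = (Fintype.card P + c) • 1 := by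
        simp only [hTS, add_mulVec, vecMulVec_mulVec, smul_mulVec, one_mulVec, add_smul,
          one_dotProduct_one, op_smul_eq_smul]
  rw [sub_mulVec, ← mulVec_mulVec, hT, mulVec_smul, hS, one_mulVec, sub_smul _ 1, one_smul]

lemma mul_sub_one_mul_self (hTS : T * S = vecMulVec 1 1 + c • 1) (hS : S *ᵥ 1 = 1)
    (hT : 1 ᵥ* T = m • 1) :
    (S * T - 1) * (S * T - 1) =
      m • vecMulVec 1 1 + (c - 2) • (S * T - 1) + (c - 1) • 1 := by
  have hSTST : S * T * (S * T) = m • vecMulVec 1 1 + c • (S * T) :=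
    calc S * T * (S * T) = S * (T * S) * T := by simp only [Matrix.mul_assoc]
      _ = m • vecMulVec 1 1 + c • (S * T) := by
        simp only [hTS, Matrix.mul_add, Matrix.add_mul, mul_vecMulVec, vecMulVec_mul, hS, hT,
          vecMulVec_smul, Matrix.mul_smul, Matrix.smul_mul, Matrix.mul_one]
  rw [sub_mul, mul_sub, hSTST, one_mul, mul_one]
  module

end Factorization

section Incidence

variable {α R : Type*} {𝓑 : α → Finset (Finset α)}

/-- The pairs `(i, B)` with `B ∈ 𝓑 i`: the vertices of `D₂`. -/
abbrev PointedBlock (𝓑 : α → Finset (Finset α)) : Type _ := {x : α × Finset α // x.2 ∈ 𝓑 x.1}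

/-- The adjacency relation of `D₂`. -/
abbrev D2Adj (x y : PointedBlock 𝓑) : Prop := x.1.1 ∈ y.1.2 ∨ (x.1.1 = y.1.1 ∧ x.1.2 ≠ y.1.2)

/-- The vertex-point matrix that marks the base point `i` of each vertex `(i, B)`. -/
noncomputable abbrev basePointMatrix (R : Type*) [Zero R] [One R] (𝓑 : α → Finset (Finset α)) :
    Matrix (PointedBlock 𝓑) α R :=
  relMatrix R fun x i => x.1.1 = i

/-- The point-vertex matrix that marks the points of `{i} ∪ B` for each vertex `(i, B)`. -/
noncomputable abbrev closedBlockMatrix (R : Type*) [Zero R] [One R]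
    (𝓑 : α → Finset (Finset α)) : Matrix α (PointedBlock 𝓑) R :=
  relMatrix R fun i x => i = x.1.1 ∨ i ∈ x.1.2

lemma d2Adj_iff (h𝓑 : ∀ i, ∀ B ∈ 𝓑 i, i ∉ B) (x y : PointedBlock 𝓑) :
    D2Adj x y ↔ x ≠ y ∧ (x.1.1 = y.1.1 ∨ x.1.1 ∈ y.1.2) := by
  obtain ⟨⟨i, B⟩, hB⟩ := x
  obtain ⟨⟨j, B'⟩, hB'⟩ := y
  have : j ∉ B' := h𝓑 j B' hB'
  grind

lemma natCard_pointedBlock_fiber (i : α) (p : Finset α → Prop) :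
    Nat.card {x : PointedBlock 𝓑 // p x.1.2 ∧ x.1.1 = i} = Nat.card {B // B ∈ 𝓑 i ∧ p B} :=
  Nat.card_congr
    { toFun := fun ⟨⟨⟨_, B⟩, hB⟩, hp, hi⟩ => ⟨B, by simpa [← hi] using hB, hp⟩
      invFun := fun ⟨B, hB, hp⟩ => ⟨⟨(i, B), hB⟩, hp, rfl⟩
      left_inv := by rintro ⟨_, _, rfl⟩; rfl
      right_inv := fun ⟨_, _, _⟩ => rfl }

lemma natCard_pointedBlock_basePoint (i : α) :
    Nat.card {x : PointedBlock 𝓑 // x.1.1 = i} = (𝓑 i).card := by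
  simpa using natCard_pointedBlock_fiber (𝓑 := 𝓑) i fun _ => True

lemma natCard_pointedBlock_mem_basePoint {i j : α} (h : ∃! B, B ∈ 𝓑 j ∧ i ∈ B) :
    Nat.card {x : PointedBlock 𝓑 // i ∈ x.1.2 ∧ x.1.1 = j} = 1 := by
  obtain ⟨_⟩ := (unique_subtype_iff_existsUnique _).2 h
  rw [natCard_pointedBlock_fiber j (i ∈ ·), Nat.card_unique]

variable [Fintype α]

lemma basePointMatrix_mulVec_one [NonAssocSemiring R] : basePointMatrix R 𝓑 *ᵥ 1 = 1 := by
  ext x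
  simp [relMatrix_mulVec_one_apply]

lemma one_vecMul_closedBlockMatrix [NonAssocSemiring R] {l : ℕ}
    (h𝓑 : ∀ i, ∀ B ∈ 𝓑 i, i ∉ B ∧ B.card = l) :
    1 ᵥ* closedBlockMatrix R 𝓑 = ((l : R) + 1) • 1 := by
  classical
  ext ⟨⟨i, B⟩, hB⟩
  obtain ⟨hi, hl⟩ := h𝓑 i B hB
  have hcard : Nat.card {j // j = i ∨ j ∈ B} = l + 1 := by
    rw [Nat.subtype_card (insert i B) (by simp), Finset.card_insert_of_notMem hi, hl]
  rw [one_vecMul_relMatrix_apply, hcard]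
  simp

variable [DecidableEq α]

lemma one_vecMul_basePointMatrix [NonAssocSemiring R] {s : ℕ} (h𝓑 : ∀ i, (𝓑 i).card = s) :
    1 ᵥ* basePointMatrix R 𝓑 = (s : R) • 1 := by
  ext i
  rw [one_vecMul_relMatrix_apply, natCard_pointedBlock_basePoint, h𝓑]
  simp

lemma closedBlockMatrix_mul_basePointMatrix [Ring R] {s : ℕ} (h𝓑 : ∀ i, (𝓑 i).card = s)
    (existsUnique : ∀ i x, x ≠ i → ∃! B, B ∈ 𝓑 i ∧ x ∈ B) :
    closedBlockMatrix R 𝓑 * basePointMatrix R 𝓑 = vecMulVec 1 1 + ((s : R) - 1) • 1 := by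
  ext i j
  rw [relMatrix_mul_relMatrix_apply]
  obtain rfl | hij := eq_or_ne i j
  · have hiff (x : PointedBlock 𝓑) : (i = x.1.1 ∨ i ∈ x.1.2) ∧ x.1.1 = i ↔ x.1.1 = i := by grind
    rw [Nat.card_congr (Equiv.subtypeEquivRight hiff), natCard_pointedBlock_basePoint, h𝓑]
    simp
  · have hiff (x : PointedBlock 𝓑) :
        (i = x.1.1 ∨ i ∈ x.1.2) ∧ x.1.1 = j ↔ i ∈ x.1.2 ∧ x.1.1 = j := by grind
    rw [Nat.card_congr (Equiv.subtypeEquivRight hiff),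
      natCard_pointedBlock_mem_basePoint (existsUnique j i hij)]
    simp [hij]

lemma relMatrix_d2Adj [Ring R] (h𝓑 : ∀ i, ∀ B ∈ 𝓑 i, i ∉ B) :
    relMatrix R (D2Adj (𝓑 := 𝓑)) = basePointMatrix R 𝓑 * closedBlockMatrix R 𝓑 - 1 := by
  ext x y
  rw [Matrix.sub_apply, relMatrix_graph_mul_apply]
  obtain rfl | hxy := eq_or_ne x y
  · simp [relMatrix, d2Adj_iff h𝓑]
  · simp [relMatrix, d2Adj_iff h𝓑, hxy]

end Incidence

/-- **Construction II with `d = 1`, second graph `D₂`.**  Let `l, s` be positive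
integers and let `P` be the finite type `α` with `ls + 1` elements; for each
`i ∈ P`, `𝓑 i` is a partition of `P \ {i}` into `s` blocks of size `l`.  The
vertices are the pairs `(i, B)` with `B ∈ 𝓑 i`, and `(i,B) → (j,B')` iff
`i ∈ B'`, or `i = j` and `B ≠ B'`.  This directed graph is a DSRG with parameters
`(ls² + s, ls + s − 1, l + s − 1, l + s − 2, l + 1)`. -/
theorem constructionII_d_eq_one_D2_dsrg
    {α : Type} [Fintype α] [DecidableEq α]
    (l s : ℕ) (hl : 0 < l) (hs : 0 < s)
    (hcard : Fintype.card α = l * s + 1)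
    (𝓑 : α → Finset (Finset α))
    (hBs : ∀ i : α, (𝓑 i).card = s)
    (hBl : ∀ i : α, ∀ B ∈ 𝓑 i, i ∉ B ∧ B.card = l)
    (hBpart : ∀ i x : α, x ≠ i → ∃! B, B ∈ 𝓑 i ∧ x ∈ B) :
    IsDSRG (V := {x : α × Finset α // x.2 ∈ 𝓑 x.1})
      (fun x y => x.1.1 ∈ y.1.2 ∨ (x.1.1 = y.1.1 ∧ x.1.2 ≠ y.1.2))
      (l * s ^ 2 + s) (l * s + s - 1) (l + s - 1) (l + s - 2) (l + 1) := by
  have notMem i B hB := (hBl i B hB).1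
  have hS := basePointMatrix_mulVec_one (R := ℤ) (𝓑 := 𝓑)
  have hS' := one_vecMul_basePointMatrix (R := ℤ) hBs
  have hT := one_vecMul_closedBlockMatrix (R := ℤ) hBl
  have hTS := closedBlockMatrix_mul_basePointMatrix (R := ℤ) hBs hBpart
  have hA := relMatrix_d2Adj (R := ℤ) notMem
  have hk : ((l * s + s - 1 : ℕ) : ℤ) = l * s + s - 1 := by omega
  have ht : ((l + s - 1 : ℕ) : ℤ) = l + s - 1 := by omega
  have hlam : ((l + s - 2 : ℕ) : ℤ) = l + s - 2 := by omega
  refine IsDSRG.of_relMatrix (R := ℤ) (Adj := D2Adj (𝓑 := 𝓑)) (by simpa [D2Adj] using notMem)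
    ?_ ?_ ?_ ?_
  · rw [card_eq_of_mulVec_one_of_one_vecMul hS hS', hcard]
    push_cast
    ring
  · rw [hA, mul_sub_one_mulVec_one hTS hS, hcard, hk]
    push_cast
    ring_nf
  · rw [hA, one_vecMul_mul_sub_one hS' hT, hk]
    ring_nf
  · rw [hA, mul_sub_one_mul_self hTS hS hT, ht, hlam]
    push_cast
    module
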